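/- The graph ΘΘ₆ is not a spanner: for every real t there exists a finite set S of points in the plane in general position and points u, v ∈ S such that every path between u and v in ΘΘ₆(S) has length greater than t·|uv|. -/

import Mathlib

open Real

noncomputable section

/-- Counterclockwise angle in `[0, 2π)` from the positive x-axis to the direction of `z`. -/
def argIn (z : ℂ) : ℝ := if 0 ≤ Complex.arg z then Complex.arg z else Complex.arg z + 2 * π

/-- The half-open cone `C_i(u)` with apex `u`: points `p ≠ u` whose direction from `u` has
counterclockwise angle in `[(i-1)π/3, iπ/3)`. -/
def cone (i : ℕ) (u : ℂ) : Set ℂ :=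
  {p | p ≠ u ∧ argIn (p - u) ∈ Set.Ico (((i : ℝ) - 1) * (π / 3)) ((i : ℝ) * (π / 3))}

/-- The index `i ∈ {1, …, 6}` of the cone of `u` containing `v`. -/
def coneIdx (u v : ℂ) : ℕ := (⌊argIn (v - u) / (π / 3)⌋).toNat + 1

/-- The angle of the bisector ray of the cone of `u` containing `v`. -/
def bisAngle (u v : ℂ) : ℝ := ((coneIdx u v : ℝ) - 1) * (π / 3) + π / 6

/-- The projective distance from `u` to `v`: the Euclidean distance from `u` to the
orthogonal projection of `v` onto the bisector ray of the cone of `u` containing `v`. -/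
def projDist (u v : ℂ) : ℝ :=
  ((v - u) * Complex.exp (-(Complex.I * (bisAngle u v : ℂ)))).re

/-- `S` is in general position: no two points of `S` lie on a common line parallel to one of
the six rays from the origin at angles `jπ/3`. -/
def GenPos (S : Finset ℂ) : Prop :=
  ∀ u ∈ S, ∀ v ∈ S, u ≠ v → ∀ j : ℕ, argIn (v - u) ≠ (j : ℝ) * (π / 3)

/-- `S` is in convex position: every point of `S` is an extreme point of the convex hull. -/
def ConvexPos (S : Finset ℂ) : Prop :=
  ∀ p ∈ S, p ∈ Set.extremePoints ℝ (convexHull ℝ (S : Set ℂ))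

/-- `u → v` is a directed edge of `Θ₆(S)`: `v` minimizes the projective distance from `u`
among the points of `S` in the cone of `u` containing `v`. -/
def ThetaEdge (S : Finset ℂ) (u v : ℂ) : Prop :=
  u ∈ S ∧ v ∈ S ∧ v ≠ u ∧
    ∀ w ∈ S, w ∈ cone (coneIdx u v) u → projDist u v ≤ projDist u w

/-- `u → v` is a directed edge of `ΘΘ₆(S)`: it is an edge of `Θ₆(S)` and among all incoming
`Θ₆`-edges `w → v` with `w` in the same cone of `v` as `u`, it minimizes `‖wv‖`. -/
def ThetaThetaEdge (S : Finset ℂ) (u v : ℂ) : Prop :=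
  ThetaEdge S u v ∧
    ∀ w, ThetaEdge S w v → coneIdx v w = coneIdx v u → projDist u v ≤ projDist w v

/-- Undirected adjacency in `ΘΘ₆(S)`: paths may use edges in either direction. -/
def TTAdj (S : Finset ℂ) (u v : ℂ) : Prop := ThetaThetaEdge S u v ∨ ThetaThetaEdge S v u

/-- `p` is a path between `u` and `v` with respect to the adjacency relation `A`. -/
def IsPath (A : ℂ → ℂ → Prop) (u v : ℂ) (p : List ℂ) : Prop :=
  p.Chain' A ∧ p.head? = some u ∧ p.getLast? = some v

/-- The Euclidean length of the polygonal path through the points of `p`. -/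
def pathLength (p : List ℂ) : ℝ := (List.zipWith dist p p.tail).sum

/-!
In the oblique coordinates `x + y · exp(iπ/3)` the cones at a point are bounded by its lines of
constant `x`, constant `y` and constant `x + y`, and the projective distance is proportional to
`max |Δx| |Δy| |Δx + Δy|`. So `ΘΘ₆` depends only on sign patterns and on this distance.

A path from `u` to `v` is at least as long as the increase from `u` to `v` of any function that
changes along each edge by at most the length of the edge. Point sets and such potentials are
built together. Given a configuration with opposite corners `bot` and `top`, put a second copy to
its right, at a horizontal distance of about its height, raised by a tiny `ε`, and add two link
points between the copies: one just beside the top of the left copy, the other just beside the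
bottom of the right copy. All other points of the left copy would rather connect to their own top
than to the left link, and the edges from the links into the right copy lose against shorter ones
from its bottom and into its top. Hence the only way across is
`top → left link → right link → bottom`, which goes all the way back down and costs at least half
the height. Edges directed to the left are treated by the point symmetry of the construction.

Doubling thus turns width `W`, height `H` and potential difference `L` into about `2W + H`, `H` and
`2L + H/2`. If `W ≤ H` then `L / (W + H)` grows by almost `1/8`; exchanging the two coordinates
restores `W ≤ H`, and iterating makes the ratio unbounded.
-/

/-! ### Theta graphs in oblique coordinates -/

variable {ι κ : Type*}

/-- The point of the complex plane with oblique coordinates `v`, that is `v.1 + v.2 · exp(iπ/3)`. -/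
def pt (v : ℝ × ℝ) : ℂ := ⟨v.1 + v.2 / 2, √3 / 2 * v.2⟩

/-- `v` and `w` lie in the same cone of the apex `u`. The six cones are cut out by the lines
`x = u.1`, `y = u.2` and `x + y = u.1 + u.2`, so a point off these lines is located by three signs;
nothing is claimed about points on them. -/
def SameCone (u v w : ℝ × ℝ) : Prop :=
  SignType.sign (v.1 - u.1) = SignType.sign (w.1 - u.1) ∧
    SignType.sign (v.2 - u.2) = SignType.sign (w.2 - u.2) ∧
      SignType.sign (v.1 + v.2 - (u.1 + u.2)) = SignType.sign (w.1 + w.2 - (u.1 + u.2))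

/-- The hexagonal distance in oblique coordinates, which is `2/√3` times the projective distance. -/
def hexDist (u v : ℝ × ℝ) : ℝ :=
  max |v.1 - u.1| (max |v.2 - u.2| |v.1 + v.2 - (u.1 + u.2)|)

/-- `v` lies in the cone of `u` with directions between `0` and `π/3`. -/
def NE (u v : ℝ × ℝ) : Prop := u.1 < v.1 ∧ u.2 < v.2

/-- `v` lies in the cone of `u` with directions between `-π/3` and `0`. -/
def SE (u v : ℝ × ℝ) : Prop := u.1 < v.1 ∧ v.2 < u.2 ∧ u.1 + u.2 < v.1 + v.2

/-- The directed edges of `Θ₆` on the family of points `z` given in oblique coordinates. -/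
def Theta (z : ι → ℝ × ℝ) (i j : ι) : Prop :=
  i ≠ j ∧ ∀ k, SameCone (z i) (z j) (z k) → hexDist (z i) (z j) ≤ hexDist (z i) (z k)

/-- The directed edges of `ΘΘ₆` on the family of points `z` given in oblique coordinates. -/
def ThetaTheta (z : ι → ℝ × ℝ) (i j : ι) : Prop :=
  Theta z i j ∧
    ∀ k, Theta z k j → SameCone (z j) (z i) (z k) → hexDist (z i) (z j) ≤ hexDist (z k) (z j)

/-- General position in oblique coordinates. -/
structure Generic (z : ι → ℝ × ℝ) : Prop where
  injective_fst : Function.Injective fun i => (z i).1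
  injective_snd : Function.Injective fun i => (z i).2
  injective_add : Function.Injective fun i => (z i).1 + (z i).2

section cones
variable {u v w : ℝ × ℝ}

theorem hexDist_comm (u v : ℝ × ℝ) : hexDist u v = hexDist v u := by
  simp only [hexDist, abs_sub_comm]

theorem NE.hexDist_eq (h : NE u v) : hexDist u v = v.1 + v.2 - (u.1 + u.2) := by
  obtain ⟨hx, hy⟩ := h
  rw [hexDist, abs_of_pos (sub_pos.2 hx), abs_of_pos (sub_pos.2 hy), abs_of_pos (by linarith),
    max_eq_right (a := v.2 - u.2) (by linarith), max_eq_right (by linarith)]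

theorem SE.hexDist_eq (h : SE u v) : hexDist u v = v.1 - u.1 := by
  obtain ⟨hx, hy, hs⟩ := h
  rw [hexDist, abs_of_pos (sub_pos.2 hx), abs_of_neg (sub_neg.2 hy), abs_of_pos (sub_pos.2 hs),
    max_eq_left (max_le (by linarith) (by linarith))]

theorem NE.sameCone_iff (h : NE u v) : SameCone u v w ↔ NE u w := by
  have hs : 0 < v.1 + v.2 - (u.1 + u.2) := by linarith [h.1, h.2]
  rw [SameCone, sign_pos (sub_pos.2 h.1), sign_pos (sub_pos.2 h.2), sign_pos hs]
  simp only [eq_comm (a := (1 : SignType)), sign_eq_one_iff, sub_pos, NE]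
  exact ⟨fun hw => ⟨hw.1, hw.2.1⟩, fun hw => ⟨hw.1, hw.2, add_lt_add hw.1 hw.2⟩⟩

theorem SE.sameCone_iff (h : SE u v) : SameCone u v w ↔ SE u w := by
  rw [SameCone, sign_pos (sub_pos.2 h.1), sign_neg (sub_neg.2 h.2.1), sign_pos (sub_pos.2 h.2.2)]
  simp only [eq_comm (a := (1 : SignType)), eq_comm (a := (-1 : SignType)), sign_eq_one_iff,
    sign_eq_neg_one_iff, sub_pos, sub_neg, SE]

theorem NE.sameCone_of_NE (hv : NE v u) (hw : NE w u) : SameCone u v w := by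
  have hsv : v.1 + v.2 - (u.1 + u.2) < 0 := by linarith [hv.1, hv.2]
  have hsw : w.1 + w.2 - (u.1 + u.2) < 0 := by linarith [hw.1, hw.2]
  simp only [SameCone, sign_neg (sub_neg.2 hv.1), sign_neg (sub_neg.2 hv.2), sign_neg hsv,
    sign_neg (sub_neg.2 hw.1), sign_neg (sub_neg.2 hw.2), sign_neg hsw, and_self]

theorem SE.sameCone_of_SE (hv : SE v u) (hw : SE w u) : SameCone u v w := by
  simp only [SameCone, sign_neg (sub_neg.2 hv.1), sign_pos (sub_pos.2 hv.2.1),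
    sign_neg (sub_neg.2 hv.2.2), sign_neg (sub_neg.2 hw.1), sign_pos (sub_pos.2 hw.2.1),
    sign_neg (sub_neg.2 hw.2.2), and_self]

theorem sameCone_sub_left (c : ℝ × ℝ) : SameCone (c - u) (c - v) (c - w) ↔ SameCone u v w := by
  have sign_sub_sub (a b d : ℝ) : SignType.sign (a - b - (a - d)) = -SignType.sign (b - d) := by
    rw [sub_sub_sub_cancel_left, ← Left.sign_neg, neg_sub]
  simp only [SameCone, Prod.fst_sub, Prod.snd_sub, sub_add_sub_comm, sign_sub_sub, neg_inj]

theorem hexDist_sub_left (c u v : ℝ × ℝ) : hexDist (c - u) (c - v) = hexDist u v := by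
  rw [hexDist_comm]
  simp only [hexDist, Prod.fst_sub, Prod.snd_sub, sub_add_sub_comm, sub_sub_sub_cancel_left]

theorem sameCone_swap : SameCone u.swap v.swap w.swap ↔ SameCone u v w := by
  simp only [SameCone, Prod.fst_swap, Prod.snd_swap, add_comm (Prod.snd _), and_left_comm]

theorem hexDist_swap (u v : ℝ × ℝ) : hexDist u.swap v.swap = hexDist u v := by
  simp only [hexDist, Prod.fst_swap, Prod.snd_swap, add_comm (Prod.snd _), max_left_comm]

theorem SameCone.hexDist_le (h : SameCone u v w) (hux : u.1 < w.1) (hus : u.1 + u.2 < w.1 + w.2)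
    (hvx : v.1 < w.1) (hvs : v.1 + v.2 < w.1 + w.2) : hexDist u v ≤ hexDist u w := by
  have hx : 0 < v.1 - u.1 := by
    rw [← sign_eq_one_iff, h.1, sign_eq_one_iff]; exact sub_pos.2 hux
  have hs : 0 < v.1 + v.2 - (u.1 + u.2) := by
    rw [← sign_eq_one_iff, h.2.2, sign_eq_one_iff]; exact sub_pos.2 hus
  have hwx : w.1 - u.1 ≤ hexDist u w := (le_abs_self _).trans (le_max_left _ _)
  have hws : w.1 + w.2 - (u.1 + u.2) ≤ hexDist u w :=
    (le_abs_self _).trans ((le_max_right _ _).trans (le_max_right _ _))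
  refine max_le ?_ (max_le ?_ ?_) <;> rw [abs_le] <;> constructor <;> linarith

end cones

section edges
variable {z : ι → ℝ × ℝ} {i j k : ι}

theorem theta_of_NE (hj : NE (z i) (z j))
    (h : ∀ k, NE (z i) (z k) → (z j).1 + (z j).2 ≤ (z k).1 + (z k).2) : Theta z i j := by
  refine ⟨fun hij => hj.1.ne (by rw [hij]), fun k hk => ?_⟩
  have hk := hj.sameCone_iff.1 hk
  rw [hj.hexDist_eq, hk.hexDist_eq]
  exact sub_le_sub_right (h k hk) _

theorem theta_of_SE (hj : SE (z i) (z j)) (h : ∀ k, SE (z i) (z k) → (z j).1 ≤ (z k).1) :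
    Theta z i j := by
  refine ⟨fun hij => hj.1.ne (by rw [hij]), fun k hk => ?_⟩
  have hk := hj.sameCone_iff.1 hk
  rw [hj.hexDist_eq, hk.hexDist_eq]
  exact sub_le_sub_right (h k hk) _

theorem Theta.add_le_of_NE (h : Theta z i j) (hj : NE (z i) (z j)) (hk : NE (z i) (z k)) :
    (z j).1 + (z j).2 ≤ (z k).1 + (z k).2 := by
  simpa only [hj.hexDist_eq, hk.hexDist_eq, sub_le_sub_iff_right] using
    h.2 k (hj.sameCone_iff.2 hk)

theorem Theta.fst_le_of_SE (h : Theta z i j) (hj : SE (z i) (z j)) (hk : SE (z i) (z k)) :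
    (z j).1 ≤ (z k).1 := by
  simpa only [hj.hexDist_eq, hk.hexDist_eq, sub_le_sub_iff_right] using
    h.2 k (hj.sameCone_iff.2 hk)

theorem ThetaTheta.add_le_of_NE (h : ThetaTheta z i j) (hi : NE (z i) (z j))
    (hk : NE (z k) (z j)) (hkj : Theta z k j) : (z k).1 + (z k).2 ≤ (z i).1 + (z i).2 := by
  simpa only [hi.hexDist_eq, hk.hexDist_eq, sub_le_sub_iff_left] using
    h.2 k hkj (hi.sameCone_of_NE hk)

theorem ThetaTheta.fst_le_of_SE (h : ThetaTheta z i j) (hi : SE (z i) (z j))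
    (hk : SE (z k) (z j)) (hkj : Theta z k j) : (z k).1 ≤ (z i).1 := by
  simpa only [hi.hexDist_eq, hk.hexDist_eq, sub_le_sub_iff_left] using
    h.2 k hkj (hi.sameCone_of_SE hk)

end edges

/-- The map `f` identifies the points `z` with a part of the points `w` in such a way that cones and
hexagonal distances agree and none of the other points of `w` blocks an edge of this part. -/
structure ThetaEmbedding (z : ι → ℝ × ℝ) (w : κ → ℝ × ℝ) (f : ι → κ) : Prop where
  injective : Function.Injective f
  sameCone_iff : ∀ i j k,
    SameCone (w (f i)) (w (f j)) (w (f k)) ↔ SameCone (z i) (z j) (z k)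
  hexDist_eq : ∀ i j, hexDist (w (f i)) (w (f j)) = hexDist (z i) (z j)
  hexDist_le : ∀ i j, ∀ k ∉ Set.range f, SameCone (w (f i)) (w (f j)) (w k) →
    hexDist (w (f i)) (w (f j)) ≤ hexDist (w (f i)) (w k)

namespace ThetaEmbedding
variable {z : ι → ℝ × ℝ} {w : κ → ℝ × ℝ} {f : ι → κ} {i j : ι}

theorem theta_iff (hf : ThetaEmbedding z w f) : Theta w (f i) (f j) ↔ Theta z i j := by
  refine and_congr hf.injective.ne_iff ⟨fun h k hk => ?_, fun h k hk => ?_⟩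
  · simpa only [hf.hexDist_eq] using h (f k) ((hf.sameCone_iff i j k).2 hk)
  · by_cases hkf : k ∈ Set.range f
    · obtain ⟨k, rfl⟩ := hkf
      simpa only [hf.hexDist_eq] using h k ((hf.sameCone_iff i j k).1 hk)
    · exact hf.hexDist_le i j k hkf hk

theorem thetaTheta (hf : ThetaEmbedding z w f) (h : ThetaTheta w (f i) (f j)) :
    ThetaTheta z i j := by
  refine ⟨hf.theta_iff.1 h.1, fun k hk hc => ?_⟩
  simpa only [hf.hexDist_eq] using h.2 (f k) (hf.theta_iff.2 hk) ((hf.sameCone_iff j i k).2 hc)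

theorem of_pointReflection (hf : Function.Bijective f) {c : ℝ × ℝ} (h : ∀ i, w (f i) = c - z i) :
    ThetaEmbedding z w f where
  injective := hf.injective
  sameCone_iff i j k := by simp only [h, sameCone_sub_left]
  hexDist_eq i j := by simp only [h, hexDist_sub_left]
  hexDist_le _ _ k hk := absurd (hf.surjective k) hk

theorem swap (z : ι → ℝ × ℝ) : ThetaEmbedding z (fun i => (z i).swap) id where
  injective := Function.injective_id
  sameCone_iff _ _ _ := sameCone_swap
  hexDist_eq _ _ := hexDist_swap _ _
  hexDist_le _ _ k hk := absurd ⟨k, rfl⟩ hk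

end ThetaEmbedding

/-! ### Euclidean distances and potentials -/

theorem pt_sub (u v : ℝ × ℝ) : pt u - pt v = pt (u - v) := by
  apply Complex.ext <;> simp only [pt, Complex.sub_re, Complex.sub_im, Prod.fst_sub, Prod.snd_sub]
    <;> ring

theorem norm_pt (v : ℝ × ℝ) : ‖pt v‖ = √(v.1 ^ 2 + v.1 * v.2 + v.2 ^ 2) := by
  have h3 : √3 * √3 = 3 := Real.mul_self_sqrt (by norm_num)
  rw [Complex.norm_def, Complex.normSq_apply]
  congr 1
  simp only [pt]
  linear_combination (v.2 ^ 2 / 4) * h3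

theorem dist_pt (u v : ℝ × ℝ) : dist (pt u) (pt v) = ‖pt (u - v)‖ := by
  rw [dist_eq_norm, pt_sub]

theorem norm_pt_le (v : ℝ × ℝ) : ‖pt v‖ ≤ |v.1| + |v.2| := by
  rw [norm_pt, Real.sqrt_le_left (by positivity)]
  nlinarith [sq_abs v.1, sq_abs v.2, abs_mul v.1 v.2, le_abs_self (v.1 * v.2),
    abs_nonneg (v.1 * v.2)]

theorem abs_fst_le_two_mul_norm_pt (v : ℝ × ℝ) : |v.1| ≤ 2 * ‖pt v‖ := by
  rw [norm_pt, ← div_le_iff₀' two_pos]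
  refine Real.le_sqrt_of_sq_le ?_
  rw [div_pow, sq_abs]
  nlinarith [sq_nonneg (v.1 + 2 * v.2), sq_nonneg v.1]

theorem norm_pt_swap (v : ℝ × ℝ) : ‖pt v.swap‖ = ‖pt v‖ := by
  rw [norm_pt, norm_pt, Prod.fst_swap, Prod.snd_swap]
  ring_nf

/-- A function on the points `z` that changes along each edge of `ΘΘ₆` by at most the Euclidean
length of the edge. -/
def IsPotential (z : ι → ℝ × ℝ) (φ : ι → ℝ) : Prop :=
  ∀ i j, ThetaTheta z i j → |φ i - φ j| ≤ dist (pt (z i)) (pt (z j))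

theorem IsPotential.swap {z : ι → ℝ × ℝ} {φ : ι → ℝ} (hφ : IsPotential z φ) :
    IsPotential (fun i => (z i).swap) φ := by
  intro i j h
  have hij := hφ i j ((ThetaEmbedding.swap z).thetaTheta h)
  rwa [dist_pt, ← norm_pt_swap, Prod.swap_sub, ← dist_pt] at hij

/-! ### Configurations and their doubling -/

/-- A family of points in general position, given in oblique coordinates, with a corner `bot` that
is smallest and a corner `top` that is largest in both coordinates. -/
structure Config (ι : Type*) where
  z : ι → ℝ × ℝ
  bot : ι
  top : ι
  bot_ne_top : bot ≠ top
  generic : Generic z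
  bot_NE : ∀ i, i ≠ bot → NE (z bot) (z i)
  NE_top : ∀ i, i ≠ top → NE (z i) (z top)

/-- Index set of the doubled configuration: two copies of `ι`, and two link points in the gap
between them, one next to each copy. -/
inductive Doubled (ι : Type*)
  | left (i : ι)
  | right (i : ι)
  | leftLink
  | rightLink

namespace Doubled

instance [Finite ι] : Finite (Doubled ι) := by
  refine Finite.of_surjective
    (Sum.elim (Sum.elim left right) fun b => cond b leftLink rightLink) ?_
  rintro (i | i | _ | _)
  exacts [⟨.inl (.inl i), rfl⟩, ⟨.inl (.inr i), rfl⟩, ⟨.inr true, rfl⟩, ⟨.inr false, rfl⟩]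

/-- The point reflection of the doubled configuration on indices. -/
def mirror : Doubled ι → Doubled ι
  | left i => right i
  | right i => left i
  | leftLink => rightLink
  | rightLink => leftLink

theorem mirror_involutive : Function.Involutive (mirror : Doubled ι → Doubled ι) := by
  rintro (_ | _ | _ | _) <;> rfl

theorem injective_of_lt {f : Doubled ι → ℝ} (hleft : Function.Injective fun i => f (left i))
    (hright : Function.Injective fun i => f (right i)) (hl : ∀ i, f (left i) < f leftLink)
    (hlr : f leftLink < f rightLink) (hr : ∀ i, f rightLink < f (right i)) :
    Function.Injective f := by
  rintro (i | i | _ | _) (j | j | _ | _) hij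
  case left.left => rw [hleft hij]
  case right.right => rw [hright hij]
  case leftLink.leftLink | rightLink.rightLink => rfl
  all_goals grind

end Doubled

namespace Config
open Doubled

/-- The extent in the first coordinate. -/
def width (C : Config ι) : ℝ := (C.z C.top).1 - (C.z C.bot).1

/-- The extent in the second coordinate. -/
def height (C : Config ι) : ℝ := (C.z C.top).2 - (C.z C.bot).2

/-- The configuration with the two oblique coordinates exchanged. -/
def swap (C : Config ι) : Config ι where
  z i := (C.z i).swap
  bot := C.bot
  top := C.top
  bot_ne_top := C.bot_ne_top
  generic := ⟨C.generic.injective_snd, C.generic.injective_fst, by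
    simpa only [Prod.fst_swap, Prod.snd_swap, add_comm] using C.generic.injective_add⟩
  bot_NE i hi := (C.bot_NE i hi).symm
  NE_top i hi := (C.NE_top i hi).symm

/-- The configuration reflected in the origin. -/
def reflect (C : Config ι) : Config ι where
  z i := -C.z i
  bot := C.top
  top := C.bot
  bot_ne_top := C.bot_ne_top.symm
  generic := ⟨neg_injective.comp C.generic.injective_fst,
    neg_injective.comp C.generic.injective_snd, by
      simpa only [Prod.fst_neg, Prod.snd_neg, ← neg_add] using!
        neg_injective.comp C.generic.injective_add⟩
  bot_NE i hi := ⟨neg_lt_neg (C.NE_top i hi).1, neg_lt_neg (C.NE_top i hi).2⟩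
  NE_top i hi := ⟨neg_lt_neg (C.bot_NE i hi).1, neg_lt_neg (C.bot_NE i hi).2⟩

/-- The amount by which the right copy is moved in the doubled configuration. The first coordinate
makes room for the link points, see `doublePt_fst_lt` and `doublePt_add_lt`. -/
def shift (C : Config ι) (ε : ℝ) : ℝ × ℝ := (C.width + C.height + 4 * ε, ε)

/-- The points of the doubled configuration. Up to `ε` the copies lie at the same height, the left
link at the height of the top and the right link at the height of the bottom. -/
def doublePt (C : Config ι) (ε : ℝ) : Doubled ι → ℝ × ℝ
  | left i => C.z i
  | right i => C.z i + C.shift ε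
  | leftLink => C.z C.top + (2 * ε, -ε)
  | rightLink => C.z C.bot + C.shift ε + (-2 * ε, ε)

/-- A point of the original configuration and a number `c` such that the given point of the doubled
configuration lies `c * ε` above it. -/
def level (C : Config ι) : Doubled ι → ι × ℝ
  | left i => (i, 0)
  | right i => (i, 1)
  | leftLink => (C.top, -1)
  | rightLink => (C.bot, 2)

/-- The smallness of `ε` which the doubling needs. -/
structure Small (C : Config ι) (ε : ℝ) : Prop where
  pos : 0 < ε
  gap : ∀ i j, i ≠ j → 4 * ε < |(C.z i).2 - (C.z j).2|

section
variable (C : Config ι) (i : ι)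

theorem width_pos : 0 < C.width := sub_pos.2 (C.bot_NE _ C.bot_ne_top.symm).1

theorem height_pos : 0 < C.height := sub_pos.2 (C.bot_NE _ C.bot_ne_top.symm).2

theorem bot_le : C.z C.bot ≤ C.z i := by
  obtain rfl | hi := eq_or_ne i C.bot
  · exact le_rfl
  · exact ⟨(C.bot_NE i hi).1.le, (C.bot_NE i hi).2.le⟩

theorem le_top : C.z i ≤ C.z C.top := by
  obtain rfl | hi := eq_or_ne i C.top
  · exact le_rfl
  · exact ⟨(C.NE_top i hi).1.le, (C.NE_top i hi).2.le⟩

theorem exists_small [Finite ι] {δ : ℝ} (hδ : 0 < δ) : ∃ ε ≤ δ, C.Small ε := by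
  have small_gap : ∀ᶠ ε in nhdsWithin (0 : ℝ) (Set.Ioi 0),
      ∀ i j, i ≠ j → 4 * ε < |(C.z i).2 - (C.z j).2| := by
    simp only [Filter.eventually_all]
    intro i j hij
    have hpos : 0 < |(C.z i).2 - (C.z j).2| :=
      abs_pos.2 (sub_ne_zero.2 (C.generic.injective_snd.ne hij))
    filter_upwards [Ioo_mem_nhdsGT (show 0 < |(C.z i).2 - (C.z j).2| / 4 by positivity)]
      with ε hε
    linarith [hε.2]
  obtain ⟨ε, hgap, hε⟩ := (small_gap.and (Ioc_mem_nhdsGT hδ)).exists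
  exact ⟨ε, hε.2, hε.1, hgap⟩

end

section
variable {C : Config ι} {ε : ℝ} {i j : ι}

namespace Small

theorem reflect (hε : C.Small ε) : C.reflect.Small ε where
  pos := hε.pos
  gap i j hij := by
    simpa only [Config.reflect, Prod.snd_neg, neg_sub_neg] using hε.gap j i hij.symm

theorem bot_add_lt (hε : C.Small ε) (hi : i ≠ C.bot) :
    (C.z C.bot).2 + 4 * ε < (C.z i).2 := by
  have := hε.gap i C.bot hi
  rw [abs_of_pos (sub_pos.2 (C.bot_NE i hi).2)] at this
  linarith

theorem add_lt_top (hε : C.Small ε) (hi : i ≠ C.top) :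
    (C.z i).2 + 4 * ε < (C.z C.top).2 := by
  have := hε.gap C.top i hi.symm
  rw [abs_of_pos (sub_pos.2 (C.NE_top i hi).2)] at this
  linarith

end Small

theorem doublePt_fst_lt (hε : C.Small ε) (i j : ι) :
    (C.doublePt ε (left i)).1 < (C.doublePt ε leftLink).1 ∧
      (C.doublePt ε leftLink).1 < (C.doublePt ε rightLink).1 ∧
      (C.doublePt ε rightLink).1 < (C.doublePt ε (right j)).1 := by
  simp only [doublePt, shift, width, Prod.fst_add]
  refine ⟨?_, ?_, ?_⟩ <;> linarith [hε.pos, C.height_pos, (C.le_top i).1, (C.bot_le j).1]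

theorem doublePt_add_lt (hε : C.Small ε) (i j : ι) :
    (C.doublePt ε (left i)).1 + (C.doublePt ε (left i)).2 <
        (C.doublePt ε leftLink).1 + (C.doublePt ε leftLink).2 ∧
      (C.doublePt ε leftLink).1 + (C.doublePt ε leftLink).2 <
        (C.doublePt ε rightLink).1 + (C.doublePt ε rightLink).2 ∧
      (C.doublePt ε rightLink).1 + (C.doublePt ε rightLink).2 <
        (C.doublePt ε (right j)).1 + (C.doublePt ε (right j)).2 := by
  simp only [doublePt, shift, width, height, Prod.fst_add, Prod.snd_add]
  refine ⟨?_, ?_, ?_⟩ <;>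
    linarith [hε.pos, (C.le_top i).1, (C.le_top i).2, (C.bot_le j).1, (C.bot_le j).2]

theorem snd_doublePt (C : Config ι) (ε : ℝ) (d : Doubled ι) :
    (C.doublePt ε d).2 = (C.z (C.level d).1).2 + (C.level d).2 * ε := by
  rcases d with i | i | _ | _ <;> simp only [doublePt, level, shift, Prod.snd_add] <;> ring

theorem injective_level (C : Config ι) : Function.Injective C.level := by
  rintro (i | i | _ | _) (j | j | _ | _) h <;> simp only [level, Prod.mk.injEq] at h <;> grind

theorem injective_snd_doublePt (hε : C.Small ε) :
    Function.Injective fun d => (C.doublePt ε d).2 := by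
  intro d e h
  simp only [snd_doublePt] at h
  have offset_mem (d : Doubled ι) : (C.level d).2 ∈ Set.Icc (-1 : ℝ) 2 := by
    rcases d with i | i | _ | _ <;> norm_num [level]
  have base_eq : (C.level d).1 = (C.level e).1 := by
    by_contra hne
    refine (hε.gap _ _ hne).not_ge (abs_le.2 ⟨?_, ?_⟩) <;>
      nlinarith [hε.pos, (offset_mem d).1, (offset_mem d).2, (offset_mem e).1, (offset_mem e).2]
  rw [base_eq, add_right_inj, mul_left_inj' hε.pos.ne'] at h
  exact C.injective_level (Prod.ext base_eq h)

theorem generic_doublePt (hε : C.Small ε) : Generic (C.doublePt ε) where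
  injective_fst := injective_of_lt C.generic.injective_fst
    ((add_left_injective _).comp C.generic.injective_fst) (fun i => (doublePt_fst_lt hε i i).1)
    (doublePt_fst_lt hε C.bot C.bot).2.1 (fun i => (doublePt_fst_lt hε i i).2.2)
  injective_snd := injective_snd_doublePt hε
  injective_add := by
    refine injective_of_lt C.generic.injective_add (fun i j h => C.generic.injective_add ?_)
      (fun i => (doublePt_add_lt hε i i).1) (doublePt_add_lt hε C.bot C.bot).2.1
      (fun i => (doublePt_add_lt hε i i).2.2)
    simp only [doublePt, Prod.fst_add, Prod.snd_add] at h
    linarith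

theorem thetaEmbedding_left (hε : C.Small ε) : ThetaEmbedding C.z (C.doublePt ε) left where
  injective _ _ := left.inj
  sameCone_iff _ _ _ := Iff.rfl
  hexDist_eq _ _ := rfl
  hexDist_le i j k hk hc := by
    have beyond (l : ι) : (C.doublePt ε (left l)).1 < (C.doublePt ε k).1 ∧
        (C.doublePt ε (left l)).1 + (C.doublePt ε (left l)).2 <
          (C.doublePt ε k).1 + (C.doublePt ε k).2 := by
      have hx := doublePt_fst_lt hε l
      have hs := doublePt_add_lt hε l
      rcases k with k | k | _ | _
      · exact absurd ⟨k, rfl⟩ hk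
      · exact ⟨by linarith [hx k], by linarith [hs k]⟩
      · exact ⟨(hx l).1, (hs l).1⟩
      · exact ⟨by linarith [hx l], by linarith [hs l]⟩
    exact hc.hexDist_le (beyond i).1 (beyond i).2 (beyond j).1 (beyond j).2

theorem thetaEmbedding_reflect (C : Config ι) : ThetaEmbedding C.z C.reflect.z id :=
  .of_pointReflection Function.bijective_id (c := 0) fun _ => (zero_sub _).symm

/-- The doubled configuration is point symmetric up to a point reflection of the original one. -/
theorem thetaTheta_mirror {d e : Doubled ι} (h : ThetaTheta (C.doublePt ε) d e) :
    ThetaTheta (C.reflect.doublePt ε) d.mirror e.mirror := by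
  have embedding : ThetaEmbedding (C.reflect.doublePt ε) (C.doublePt ε) mirror := by
    refine .of_pointReflection mirror_involutive.bijective (c := C.shift ε) ?_
    rintro (i | i | _ | _) <;> ext <;>
      simp only [doublePt, mirror, reflect, shift, width, height, Prod.fst_add, Prod.snd_add,
        Prod.fst_sub, Prod.snd_sub, Prod.fst_neg, Prod.snd_neg] <;> ring
  exact embedding.thetaTheta (by rwa [mirror_involutive, mirror_involutive])

end

/-! ### Edges of the doubled configuration -/

section
variable {C : Config ι} {ε : ℝ} {i j : ι}

theorem NE_left_right (hε : C.Small ε) (h : (C.z i).2 ≤ (C.z j).2) :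
    NE (C.doublePt ε (left i)) (C.doublePt ε (right j)) := by
  refine ⟨by linarith [doublePt_fst_lt hε i j], ?_⟩
  simp only [doublePt, shift, Prod.snd_add]
  linarith [hε.pos]

theorem NE_left_leftLink (hε : C.Small ε) (hi : i ≠ C.top) :
    NE (C.doublePt ε (left i)) (C.doublePt ε leftLink) := by
  refine ⟨(doublePt_fst_lt hε i i).1, ?_⟩
  simp only [doublePt, Prod.snd_add]
  linarith [hε.pos, hε.add_lt_top hi]

theorem NE_left_bot_rightLink (hε : C.Small ε) :
    NE (C.doublePt ε (left C.bot)) (C.doublePt ε rightLink) := by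
  refine ⟨(doublePt_fst_lt hε C.bot C.bot).1.trans (doublePt_fst_lt hε C.bot C.bot).2.1, ?_⟩
  simp only [doublePt, shift, Prod.snd_add]
  linarith [hε.pos]

theorem SE_left_rightLink (hε : C.Small ε) (hi : i ≠ C.bot) :
    SE (C.doublePt ε (left i)) (C.doublePt ε rightLink) := by
  refine ⟨(doublePt_fst_lt hε i i).1.trans (doublePt_fst_lt hε i i).2.1, ?_,
    (doublePt_add_lt hε i i).1.trans (doublePt_add_lt hε i i).2.1⟩
  simp only [doublePt, shift, Prod.snd_add]
  linarith [hε.pos, hε.bot_add_lt hi]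

theorem SE_leftLink_rightLink (hε : C.Small ε) :
    SE (C.doublePt ε leftLink) (C.doublePt ε rightLink) := by
  refine ⟨(doublePt_fst_lt hε C.bot C.bot).2.1, ?_, (doublePt_add_lt hε C.bot C.bot).2.1⟩
  simp only [doublePt, shift, Prod.snd_add]
  linarith [hε.pos, hε.add_lt_top C.bot_ne_top]

theorem SE_leftLink_right (hε : C.Small ε) (hi : i ≠ C.top) :
    SE (C.doublePt ε leftLink) (C.doublePt ε (right i)) := by
  refine ⟨(doublePt_fst_lt hε i i).2.1.trans (doublePt_fst_lt hε i i).2.2, ?_,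
    (doublePt_add_lt hε i i).2.1.trans (doublePt_add_lt hε i i).2.2⟩
  simp only [doublePt, shift, Prod.snd_add]
  linarith [hε.pos, hε.add_lt_top hi]

theorem NE_leftLink_right_top (hε : C.Small ε) :
    NE (C.doublePt ε leftLink) (C.doublePt ε (right C.top)) := by
  refine ⟨(doublePt_fst_lt hε C.top C.top).2.1.trans (doublePt_fst_lt hε C.top C.top).2.2, ?_⟩
  simp only [doublePt, shift, Prod.snd_add]
  linarith [hε.pos]

theorem NE_rightLink_right (hε : C.Small ε) (hi : i ≠ C.bot) :
    NE (C.doublePt ε rightLink) (C.doublePt ε (right i)) := by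
  refine ⟨(doublePt_fst_lt hε i i).2.2, ?_⟩
  simp only [doublePt, shift, Prod.snd_add]
  linarith [hε.pos, hε.bot_add_lt hi]

theorem NE_right_right_iff :
    NE (C.doublePt ε (right i)) (C.doublePt ε (right j)) ↔ NE (C.z i) (C.z j) := by
  simp only [doublePt, NE, Prod.fst_add, Prod.snd_add, add_lt_add_iff_right]

theorem exists_eq_right_of_fst_lt (hε : C.Small ε) {d : Doubled ι}
    (h : (C.doublePt ε rightLink).1 < (C.doublePt ε d).1) : ∃ j, d = right j := by
  have order i := doublePt_fst_lt hε i i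
  rcases d with j | j | _ | _
  · linarith [order j]
  · exact ⟨j, rfl⟩
  · linarith [order C.bot]
  · exact absurd h (lt_irrefl _)

theorem exists_eq_right_of_NE (hε : C.Small ε) {d : Doubled ι}
    (h : NE (C.doublePt ε (right i)) (C.doublePt ε d)) : ∃ j, d = right j ∧ NE (C.z i) (C.z j) := by
  obtain ⟨j, rfl⟩ := exists_eq_right_of_fst_lt hε ((doublePt_fst_lt hε i i).2.2.trans h.1)
  exact ⟨j, rfl, NE_right_right_iff.1 h⟩

theorem theta_leftLink_rightLink (hε : C.Small ε) :
    Theta (C.doublePt ε) leftLink rightLink := by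
  refine theta_of_SE (SE_leftLink_rightLink hε) fun d hd => le_of_not_gt fun hlt => ?_
  rcases d with i | i | _ | _
  · exact hd.1.not_gt (doublePt_fst_lt hε i i).1
  · exact hlt.not_gt (doublePt_fst_lt hε i i).2.2
  · exact lt_irrefl _ hd.1
  · exact lt_irrefl _ hlt

theorem exists_theta_right_top [Finite ι] (hε : C.Small ε) :
    ∃ q ≠ C.top, Theta (C.doublePt ε) (right q) (right C.top) := by
  obtain ⟨q, hq, hmax⟩ := Set.exists_max_image {i | i ≠ C.top} (fun i => (C.z i).1 + (C.z i).2)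
    (Set.toFinite _) ⟨C.bot, C.bot_ne_top⟩
  refine ⟨q, hq, theta_of_NE (NE_right_right_iff.2 (C.NE_top q hq)) fun d hd => ?_⟩
  obtain ⟨j, rfl, hj⟩ := exists_eq_right_of_NE hε hd
  have hj_top : j = C.top := of_not_not fun hne => by linarith [hmax j hne, hj.1, hj.2]
  rw [hj_top]

/-- The last edge inside the right copy is shorter than any edge entering `right C.top` from
outside the copy. -/
theorem not_thetaTheta_right_top [Finite ι] (hε : C.Small ε) {d : Doubled ι}
    (hd : NE (C.doublePt ε d) (C.doublePt ε (right C.top))) (hd' : ∀ i, d ≠ right i) :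
    ¬ThetaTheta (C.doublePt ε) d (right C.top) := fun h => by
  obtain ⟨q, hq, hθ⟩ := exists_theta_right_top hε
  have hle := h.add_le_of_NE hd (NE_right_right_iff.2 (C.NE_top q hq)) hθ
  have order i := doublePt_add_lt hε i q
  rcases d with i | i | _ | _
  · linarith [order i]
  · exact hd' i rfl
  · linarith [order q]
  · linarith [order q]

theorem add_le_of_theta_left {d : Doubled ι} (h : Theta (C.doublePt ε) (left i) d)
    (hd : NE (C.doublePt ε (left i)) (C.doublePt ε d)) (hi : i ≠ C.top) :
    (C.doublePt ε d).1 + (C.doublePt ε d).2 ≤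
      (C.doublePt ε (left C.top)).1 + (C.doublePt ε (left C.top)).2 :=
  h.add_le_of_NE hd (k := left C.top) (C.NE_top i hi)

theorem eq_top_of_thetaTheta_left_leftLink (hε : C.Small ε)
    (h : ThetaTheta (C.doublePt ε) (left i) leftLink) : i = C.top := by
  by_contra hi
  exact (add_le_of_theta_left h.1 (NE_left_leftLink hε hi) hi).not_gt
    (doublePt_add_lt hε C.top i).1

theorem not_thetaTheta_left_rightLink (hε : C.Small ε) :
    ¬ThetaTheta (C.doublePt ε) (left i) rightLink := fun h => by
  obtain rfl | hi := eq_or_ne i C.bot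
  · have hle := add_le_of_theta_left h.1 (NE_left_bot_rightLink hε) C.bot_ne_top
    linarith [doublePt_add_lt hε C.top C.top]
  · exact (h.fst_le_of_SE (SE_left_rightLink hε hi) (SE_leftLink_rightLink hε)
      (theta_leftLink_rightLink hε)).not_gt (doublePt_fst_lt hε i i).1

theorem eq_bot_of_thetaTheta_rightLink_right (hε : C.Small ε)
    (h : ThetaTheta (C.doublePt ε) rightLink (right i)) : i = C.bot := by
  by_contra hi
  have hbi : NE (C.doublePt ε (right C.bot)) (C.doublePt ε (right i)) :=
    NE_right_right_iff.2 (C.bot_NE i hi)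
  have bot_right : Theta (C.doublePt ε) (right C.bot) (right i) := by
    refine theta_of_NE hbi fun d hd => ?_
    obtain ⟨j, rfl, hj⟩ := exists_eq_right_of_NE hε hd
    have hj_bot : j ≠ C.bot := fun hjb => hj.1.ne (by rw [hjb])
    exact h.1.add_le_of_NE (NE_rightLink_right hε hi) (NE_rightLink_right hε hj_bot)
  exact (h.add_le_of_NE (NE_rightLink_right hε hi) hbi bot_right).not_gt
    (doublePt_add_lt hε C.bot C.bot).2.2

theorem not_thetaTheta_leftLink_right [Finite ι] (hε : C.Small ε) :
    ¬ThetaTheta (C.doublePt ε) leftLink (right i) := fun h => by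
  obtain rfl | hi := eq_or_ne i C.top
  · exact not_thetaTheta_right_top hε (NE_leftLink_right_top hε) (by simp) h
  · exact (h.1.fst_le_of_SE (SE_leftLink_right hε hi) (SE_leftLink_rightLink hε)).not_gt
      (doublePt_fst_lt hε i i).2.2

theorem not_thetaTheta_left_right [Finite ι] (hε : C.Small ε) :
    ¬ThetaTheta (C.doublePt ε) (left i) (right j) := fun h => by
  have hx := doublePt_fst_lt hε i j
  have hs := doublePt_add_lt hε i j
  rcases (generic_doublePt hε).injective_snd.ne h.1.1 |>.lt_or_gt with hy | hy
  · have hij : NE (C.doublePt ε (left i)) (C.doublePt ε (right j)) := ⟨by linarith, hy⟩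
    obtain rfl | hi := eq_or_ne i C.top
    · obtain rfl | hj := eq_or_ne j C.top
      · exact not_thetaTheta_right_top hε hij (by simp) h
      · simp only [doublePt, shift, Prod.snd_add] at hy
        linarith [hε.add_lt_top hj, hε.pos]
    · linarith [add_le_of_theta_left h.1 hij hi, doublePt_add_lt hε C.top j]
  · have hij : SE (C.doublePt ε (left i)) (C.doublePt ε (right j)) := ⟨by linarith, hy, by linarith⟩
    have hi : i ≠ C.bot := fun hi => hy.not_gt (NE_left_right hε (hi ▸ (C.bot_le j).2)).2
    exact (h.1.fst_le_of_SE hij (SE_left_rightLink hε hi)).not_gt hx.2.2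

theorem thetaTheta_of_left (hε : C.Small ε) (h : ThetaTheta (C.doublePt ε) (left i) (left j)) :
    ThetaTheta C.z i j :=
  (thetaEmbedding_left hε).thetaTheta h

theorem thetaTheta_of_right (hε : C.Small ε)
    (h : ThetaTheta (C.doublePt ε) (right i) (right j)) : ThetaTheta C.z i j :=
  C.thetaEmbedding_reflect.thetaTheta (thetaTheta_of_left hε.reflect (thetaTheta_mirror h))

theorem eq_bot_of_thetaTheta_right_rightLink (hε : C.Small ε)
    (h : ThetaTheta (C.doublePt ε) (right i) rightLink) : i = C.bot :=
  eq_top_of_thetaTheta_left_leftLink hε.reflect (thetaTheta_mirror h)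

theorem eq_top_of_thetaTheta_leftLink_left (hε : C.Small ε)
    (h : ThetaTheta (C.doublePt ε) leftLink (left i)) : i = C.top :=
  eq_bot_of_thetaTheta_rightLink_right hε.reflect (thetaTheta_mirror h)

theorem not_thetaTheta_right_leftLink (hε : C.Small ε) :
    ¬ThetaTheta (C.doublePt ε) (right i) leftLink := fun h =>
  not_thetaTheta_left_rightLink hε.reflect (thetaTheta_mirror h)

theorem not_thetaTheta_rightLink_left [Finite ι] (hε : C.Small ε) :
    ¬ThetaTheta (C.doublePt ε) rightLink (left i) := fun h =>
  not_thetaTheta_leftLink_right hε.reflect (thetaTheta_mirror h)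

theorem not_thetaTheta_right_left [Finite ι] (hε : C.Small ε) :
    ¬ThetaTheta (C.doublePt ε) (right i) (left j) := fun h =>
  not_thetaTheta_left_right hε.reflect (thetaTheta_mirror h)

end

/-! ### Growth of the potential -/

/-- The doubled configuration. -/
def double (C : Config ι) {ε : ℝ} (hε : C.Small ε) : Config (Doubled ι) where
  z := C.doublePt ε
  bot := left C.bot
  top := right C.top
  bot_ne_top := by simp
  generic := generic_doublePt hε
  bot_NE := by
    rintro (i | i | _ | _) hi
    · exact C.bot_NE i fun h => hi (by rw [h])
    · exact NE_left_right hε (C.bot_le i).2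
    · exact NE_left_leftLink hε C.bot_ne_top
    · exact NE_left_bot_rightLink hε
  NE_top := by
    rintro (i | i | _ | _) hi
    · exact NE_left_right hε (C.le_top i).2
    · exact NE_right_right_iff.2 (C.NE_top i fun h => hi (by rw [h]))
    · exact NE_leftLink_right_top hε
    · exact NE_rightLink_right hε C.bot_ne_top.symm

/-- The potential of the doubled configuration: each copy contributes the old potential, and the
link between them contributes half the height. -/
def doublePotential (C : Config ι) (φ : ι → ℝ) : Doubled ι → ℝ
  | left i => φ i
  | right i => φ i - φ C.bot + φ C.top + C.height / 2
  | leftLink => φ C.top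
  | rightLink => φ C.top + C.height / 2

section
variable {C : Config ι} {ε : ℝ} {φ : ι → ℝ}

theorem height_div_two_le_dist (C : Config ι) (ε : ℝ) :
    C.height / 2 ≤ dist (pt (C.doublePt ε rightLink)) (pt (C.doublePt ε leftLink)) := by
  rw [dist_pt, div_le_iff₀' two_pos]
  refine le_trans (le_abs.2 (.inl ?_)) (abs_fst_le_two_mul_norm_pt _)
  simp only [doublePt, shift, width, Prod.fst_sub, Prod.fst_add]
  linarith

theorem isPotential_double [Finite ι] (hε : C.Small ε) (hφ : IsPotential C.z φ) :
    IsPotential (C.double hε).z (C.doublePotential φ) := by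
  have link := C.height_div_two_le_dist ε
  have height_pos := C.height_pos
  rintro (i | i | _ | _) (j | j | _ | _) h <;> simp only [doublePotential]
  case left.left => exact hφ i j (thetaTheta_of_left hε h)
  case right.right =>
    have hij := hφ i j (thetaTheta_of_right hε h)
    rw [dist_pt] at hij ⊢
    simpa only [double, doublePt, add_sub_add_right_eq_sub, sub_sub_sub_cancel_right] using hij
  case left.right => exact absurd h (not_thetaTheta_left_right hε)
  case right.left => exact absurd h (not_thetaTheta_right_left hε)
  case left.rightLink => exact absurd h (not_thetaTheta_left_rightLink hε)
  case rightLink.left => exact absurd h (not_thetaTheta_rightLink_left hε)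
  case leftLink.right => exact absurd h (not_thetaTheta_leftLink_right hε)
  case right.leftLink => exact absurd h (not_thetaTheta_right_leftLink hε)
  case left.leftLink =>
    simp [eq_top_of_thetaTheta_left_leftLink hε h]
  case leftLink.left =>
    simp [eq_top_of_thetaTheta_leftLink_left hε h]
  case right.rightLink =>
    simp [eq_bot_of_thetaTheta_right_rightLink hε h]
  case rightLink.right =>
    simp [eq_bot_of_thetaTheta_rightLink_right hε h]
  case leftLink.leftLink | rightLink.rightLink => exact absurd rfl h.1.1
  case leftLink.rightLink =>
    rw [dist_comm, sub_add_cancel_left, abs_neg, abs_of_pos (by positivity)]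
    exact link
  case rightLink.leftLink =>
    rw [add_sub_cancel_left, abs_of_pos (by positivity)]
    exact link

theorem width_double (hε : C.Small ε) :
    (C.double hε).width = 2 * C.width + C.height + 4 * ε := by
  simp only [double, width, doublePt, shift, Prod.fst_add]
  ring

theorem height_double (hε : C.Small ε) : (C.double hε).height = C.height + ε := by
  simp only [double, height, doublePt, shift, Prod.snd_add]
  ring

end

theorem dist_le_width_add_height (C : Config ι) :
    dist (pt (C.z C.bot)) (pt (C.z C.top)) ≤ C.width + C.height := by
  rw [dist_comm, dist_pt, ← abs_of_pos C.width_pos, ← abs_of_pos C.height_pos]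
  exact norm_pt_le (C.z C.top - C.z C.bot)

/-- Two points, the smallest configuration. -/
def base : Config Bool where
  z b := cond b (1, 1) (0, 0)
  bot := false
  top := true
  bot_ne_top := Bool.false_ne_true
  generic := by constructor <;> rintro (_ | _) (_ | _) <;> norm_num
  bot_NE := by rintro (_ | _) h <;> simp_all [NE]
  NE_top := by rintro (_ | _) h <;> simp_all [NE]

/-- Doubling keeps the height and adds to the potential difference an amount proportional to the
size; exchanging the coordinates then makes the large extent the height again. -/
theorem exists_isPotential (n : ℕ) : ∃ (ι : Type) (_ : Finite ι) (C : Config ι) (φ : ι → ℝ),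
    IsPotential C.z φ ∧ C.width ≤ C.height ∧
      n / 16 * (C.width + C.height) ≤ φ C.top - φ C.bot := by
  induction n with
  | zero =>
    refine ⟨Bool, inferInstance, base, 0, fun i j _ => ?_, ?_, ?_⟩
    · simp
    · simp [base, width, height]
    · simp
  | succ n ih =>
    obtain ⟨ι, _, C, φ, hφ, hC, hgrowth⟩ := ih
    have hW := C.width_pos
    have hH := C.height_pos
    obtain ⟨ε, hle, hε⟩ :=
      C.exists_small (show 0 < (C.width + C.height) / (5 * (n + 1)) by positivity)
    rw [le_div_iff₀ (by positivity)] at hle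
    refine ⟨Doubled ι, inferInstance, (C.double hε).swap, C.doublePotential φ,
      (isPotential_double hε hφ).swap, ?_, ?_⟩
    · change (C.double hε).height ≤ (C.double hε).width
      rw [width_double, height_double]
      linarith [hε.pos]
    · change _ * ((C.double hε).height + (C.double hε).width) ≤
        C.doublePotential φ (right C.top) - C.doublePotential φ (left C.bot)
      rw [width_double, height_double]
      simp only [doublePotential]
      push_cast
      linarith

end Config

/-! ### Cones and projective distances in polar coordinates -/

theorem argIn_nonneg (z : ℂ) : 0 ≤ argIn z := by
  unfold argIn
  split_ifs <;> linarith [Complex.neg_pi_lt_arg z, Real.pi_pos]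

theorem argIn_lt_two_pi (z : ℂ) : argIn z < 2 * π := by
  unfold argIn
  split_ifs <;> linarith [Complex.arg_le_pi z, Real.pi_pos]

theorem argIn_zero : argIn 0 = 0 := by simp [argIn]

theorem norm_mul_cos_argIn (z : ℂ) : ‖z‖ * cos (argIn z) = z.re := by
  rw [← Complex.norm_mul_cos_arg z, argIn]
  split_ifs
  · rfl
  · rw [cos_add_two_pi]

theorem norm_mul_sin_argIn (z : ℂ) : ‖z‖ * sin (argIn z) = z.im := by
  rw [← Complex.norm_mul_sin_arg z, argIn]
  split_ifs
  · rfl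
  · rw [sin_add_two_pi]

theorem coneIdx_eq_succ_iff {u v : ℂ} {k : ℕ} :
    coneIdx u v = k + 1 ↔ argIn (v - u) ∈ Set.Ico (k * (π / 3)) ((k + 1) * (π / 3)) := by
  have hπ : 0 < π / 3 := by positivity
  rw [coneIdx, add_left_inj, Int.floor_toNat,
    Nat.floor_eq_iff (div_nonneg (argIn_nonneg _) hπ.le), le_div_iff₀ hπ, div_lt_iff₀ hπ,
    Set.mem_Ico]

theorem mem_cone_coneIdx_iff {u v w : ℂ} :
    w ∈ cone (coneIdx u v) u ↔ w ≠ u ∧ coneIdx u w = coneIdx u v := by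
  obtain ⟨k, hk⟩ : ∃ k, coneIdx u v = k + 1 := ⟨_, rfl⟩
  rw [hk, coneIdx_eq_succ_iff, cone, Set.mem_ofPred_eq, Nat.cast_succ, add_sub_cancel_right]

theorem coneIdx_le_six (u v : ℂ) : coneIdx u v ≤ 6 := by
  obtain ⟨k, hk⟩ : ∃ k, coneIdx u v = k + 1 := ⟨_, rfl⟩
  have h := (coneIdx_eq_succ_iff.1 hk).1.trans_lt (argIn_lt_two_pi _)
  have hk6 : (k : ℝ) < 6 := by nlinarith [Real.pi_pos]
  rw [hk]
  exact Nat.succ_le_of_lt (by exact_mod_cast hk6)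

theorem projDist_eq_norm_mul_cos (u v : ℂ) :
    projDist u v = ‖v - u‖ * cos (argIn (v - u) - bisAngle u v) := by
  have hexp : Complex.exp (-(Complex.I * (bisAngle u v : ℂ))) =
      ⟨cos (bisAngle u v), -sin (bisAngle u v)⟩ := by
    apply Complex.ext <;> simp [Complex.exp_re, Complex.exp_im]
  rw [projDist, hexp, Complex.mul_re, ← norm_mul_cos_argIn, ← norm_mul_sin_argIn, cos_sub]
  ring

/-- The projective distance of the point with polar coordinates `1` and `θ` from the origin, see
`maxAbsSin_eq_cos`. -/
def maxAbsSin (θ : ℝ) : ℝ := max |sin (θ + 2 * (π / 3))| (max |sin θ| |sin (θ + π / 3)|)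

theorem maxAbsSin_periodic : Function.Periodic maxAbsSin (π / 3) := fun θ => by
  have hπ : sin (θ + π / 3 + 2 * (π / 3)) = -sin θ := by rw [← sin_add_pi]; ring_nf
  have h2 : θ + π / 3 + π / 3 = θ + 2 * (π / 3) := by ring
  rw [maxAbsSin, maxAbsSin, hπ, h2, abs_neg, max_comm |sin (θ + π / 3)|, max_left_comm]

theorem maxAbsSin_eq_cos {θ : ℝ} (h0 : 0 ≤ θ) (h1 : θ ≤ π / 3) :
    maxAbsSin θ = cos (θ - π / 6) := by
  have hθ : 0 ≤ sin θ := sin_nonneg_of_nonneg_of_le_pi h0 (by linarith)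
  have hθ' : 0 ≤ sin (π / 3 - θ) := sin_nonneg_of_nonneg_of_le_pi (by linarith) (by linarith)
  have hcos : cos (θ - π / 6) = sin θ + sin (π / 3 - θ) := by
    rw [cos_sub, sin_sub, cos_pi_div_six, sin_pi_div_six, cos_pi_div_three, sin_pi_div_three]
    ring
  have h2 : sin (θ + 2 * (π / 3)) = sin (π / 3 - θ) := by rw [← sin_pi_sub]; ring_nf
  have h3 : sin (θ + π / 3) = cos (θ - π / 6) := by rw [← cos_pi_div_two_sub, ← cos_neg]; ring_nf
  rw [maxAbsSin, h2, h3, abs_of_nonneg hθ, abs_of_nonneg hθ', abs_of_nonneg (by linarith),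
    max_eq_right (a := sin θ) (by linarith), max_eq_right (by linarith)]

theorem projDist_eq_norm_mul_maxAbsSin (u v : ℂ) :
    projDist u v = ‖v - u‖ * maxAbsSin (argIn (v - u)) := by
  obtain ⟨k, hk⟩ : ∃ k, coneIdx u v = k + 1 := ⟨_, rfl⟩
  obtain ⟨h0, h1⟩ := coneIdx_eq_succ_iff.1 hk
  rw [projDist_eq_norm_mul_cos, ← maxAbsSin_periodic.sub_nat_mul_eq k,
    maxAbsSin_eq_cos (by linarith) (by linarith), bisAngle, hk, Nat.cast_succ,
    add_sub_cancel_right, sub_sub]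

theorem sign_sin_of_mem_Ioo {x : ℝ} {n : ℕ} (h : x ∈ Set.Ioo (n * π) ((n + 1) * π)) :
    SignType.sign (sin x) = (-1) ^ n := by
  have hpos : 0 < sin (x - n * π) := sin_pos_of_pos_of_lt_pi (by linarith [h.1]) (by linarith [h.2])
  rw [← sub_add_cancel x (n * π), sin_add_nat_mul_pi, sign_mul, sign_pow, Left.sign_neg,
    _root_.sign_one, sign_pos hpos, mul_one]

/-! ### Transfer to the plane -/

theorem pt_injective : Function.Injective pt := fun u v h => by
  have hsnd : u.2 = v.2 := by simpa [pt] using congrArg Complex.im h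
  have hfst : u.1 = v.1 := by simpa [pt, hsnd] using congrArg Complex.re h
  exact Prod.ext hfst hsnd

section
variable (v : ℝ × ℝ)

theorem norm_pt_mul_sin : ‖pt v‖ * sin (argIn (pt v)) = √3 / 2 * v.2 :=
  norm_mul_sin_argIn (pt v)

theorem norm_pt_mul_sin_add_pi_div_three :
    ‖pt v‖ * sin (argIn (pt v) + π / 3) = √3 / 2 * (v.1 + v.2) := by
  have hre : _ = v.1 + v.2 / 2 := norm_mul_cos_argIn (pt v)
  rw [sin_add, cos_pi_div_three, sin_pi_div_three]
  linear_combination (√3 / 2) * hre + (1 / 2) * norm_pt_mul_sin v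

theorem norm_pt_mul_sin_add_two_mul_pi_div_three :
    ‖pt v‖ * sin (argIn (pt v) + 2 * (π / 3)) = √3 / 2 * v.1 := by
  have h : sin (argIn (pt v) + 2 * (π / 3)) = sin (argIn (pt v) + π / 3) - sin (argIn (pt v)) := by
    rw [show argIn (pt v) + 2 * (π / 3) = π - (π / 3 - argIn (pt v)) by ring, sin_pi_sub, sin_sub,
      sin_add, cos_pi_div_three, sin_pi_div_three]
    ring
  rw [h, mul_sub, norm_pt_mul_sin, norm_pt_mul_sin_add_pi_div_three]
  ring

end

theorem projDist_pt (u v : ℝ × ℝ) : projDist (pt u) (pt v) = √3 / 2 * hexDist u v := by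
  have h3 : 0 ≤ √3 / 2 := by positivity
  have habs (a b : ℝ) (ha : 0 ≤ a) : a * |b| = |a * b| := by rw [abs_mul, abs_of_nonneg ha]
  rw [projDist_eq_norm_mul_maxAbsSin, pt_sub, maxAbsSin, hexDist, add_sub_add_comm]
  simp only [mul_max_of_nonneg _ _ h3, mul_max_of_nonneg _ _ (norm_nonneg _),
    habs _ _ h3, habs _ _ (norm_nonneg _), norm_pt_mul_sin, norm_pt_mul_sin_add_pi_div_three,
    norm_pt_mul_sin_add_two_mul_pi_div_three, Prod.fst_sub, Prod.snd_sub]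

/-- The signs that determine the cone of the origin containing a point off the boundary rays. -/
def signs (v : ℝ × ℝ) : SignType × SignType × SignType :=
  (SignType.sign v.1, SignType.sign v.2, SignType.sign (v.1 + v.2))

/-- The value of `signs` on the interior of the cone of the origin with index `k + 1`. -/
def coneSigns (k : ℕ) : SignType × SignType × SignType :=
  ((-1) ^ ((k + 2) / 3), (-1) ^ (k / 3), (-1) ^ ((k + 1) / 3))

theorem coneSigns_injOn : Set.InjOn coneSigns (Set.Iio 6) := by
  have inj : ∀ k < 6, ∀ l < 6, coneSigns k = coneSigns l → k = l := by decide
  exact fun k hk l hl => inj k hk l hl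

theorem sameCone_iff_signs_eq {u v w : ℝ × ℝ} : SameCone u v w ↔ signs (v - u) = signs (w - u) := by
  simp only [SameCone, signs, Prod.mk.injEq, Prod.fst_sub, Prod.snd_sub, add_sub_add_comm]

theorem signs_eq_coneSigns {v : ℝ × ℝ} {k : ℕ}
    (h : argIn (pt v) ∈ Set.Ioo (k * (π / 3)) ((k + 1) * (π / 3))) : signs v = coneSigns k := by
  obtain ⟨h0, h1⟩ := h
  have hr : 0 < ‖pt v‖ := by
    refine norm_pos_iff.2 fun hv => ?_
    have hk : (0 : ℝ) ≤ k * (π / 3) := by positivity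
    rw [hv, argIn_zero] at h0
    exact hk.not_gt h0
  have sign_coord (m : ℕ) (c : ℝ) (hc : ‖pt v‖ * sin (argIn (pt v) + m * (π / 3)) = √3 / 2 * c) :
      SignType.sign c = (-1) ^ ((k + m) / 3) := by
    have h3 : (0 : ℝ) < √3 / 2 := by positivity
    have hmem : argIn (pt v) + m * (π / 3) ∈
        Set.Ioo (((k + m) / 3 : ℕ) * π) ((((k + m) / 3 : ℕ) + 1) * π) := by
      have hle : (3 * ((k + m) / 3 : ℕ) : ℝ) ≤ k + m := by
        exact_mod_cast Nat.mul_div_le (k + m) 3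
      have hlt : (k + m + 1 : ℝ) ≤ 3 * (((k + m) / 3 : ℕ) + 1) := by
        exact_mod_cast Nat.lt_mul_div_succ (k + m) three_pos
      constructor <;> nlinarith [Real.pi_pos]
    rw [← sign_sin_of_mem_Ioo hmem, ← one_mul (SignType.sign (sin _)), ← sign_pos hr, ← sign_mul,
      hc, sign_mul, sign_pos h3, one_mul]
  have hsnd := sign_coord 0 v.2 (by simpa using norm_pt_mul_sin v)
  have hadd := sign_coord 1 (v.1 + v.2) (by simpa using norm_pt_mul_sin_add_pi_div_three v)
  have hfst := sign_coord 2 v.1 (by simpa using norm_pt_mul_sin_add_two_mul_pi_div_three v)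
  simp only [signs, coneSigns, hfst, hsnd, hadd, add_zero]

theorem argIn_pt_ne {v : ℝ × ℝ} (hfst : v.1 ≠ 0) (hsnd : v.2 ≠ 0) (hadd : v.1 + v.2 ≠ 0) (j : ℕ) :
    argIn (pt v) ≠ j * (π / 3) := by
  intro hj
  have coord_eq_zero (m : ℕ) (hm : 3 ∣ j + m) (c : ℝ)
      (hc : ‖pt v‖ * sin (argIn (pt v) + m * (π / 3)) = √3 / 2 * c) : c = 0 := by
    obtain ⟨q, hq⟩ := hm
    have hq : (j : ℝ) + m = 3 * q := by exact_mod_cast hq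
    have hangle : argIn (pt v) + m * (π / 3) = q * π := by
      rw [hj]
      linear_combination (π / 3) * hq
    rw [hangle, sin_nat_mul_pi, mul_zero, eq_comm] at hc
    exact (mul_eq_zero_iff_left (by positivity)).1 hc
  obtain hm | hm | hm : 3 ∣ j + 0 ∨ 3 ∣ j + 1 ∨ 3 ∣ j + 2 := by omega
  · exact hsnd (coord_eq_zero 0 hm _ (by simpa using norm_pt_mul_sin v))
  · exact hadd (coord_eq_zero 1 hm _ (by simpa using norm_pt_mul_sin_add_pi_div_three v))
  · exact hfst (coord_eq_zero 2 hm _ (by simpa using norm_pt_mul_sin_add_two_mul_pi_div_three v))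

theorem coneIdx_pt_eq_iff {u v w : ℝ × ℝ} (hv : ∀ j : ℕ, argIn (pt (v - u)) ≠ j * (π / 3))
    (hw : ∀ j : ℕ, argIn (pt (w - u)) ≠ j * (π / 3)) :
    coneIdx (pt u) (pt v) = coneIdx (pt u) (pt w) ↔ SameCone u v w := by
  have spec (x : ℝ × ℝ) (hx : ∀ j : ℕ, argIn (pt (x - u)) ≠ j * (π / 3)) :
      ∃ k < 6, coneIdx (pt u) (pt x) = k + 1 ∧ signs (x - u) = coneSigns k := by
    obtain ⟨k, hk⟩ : ∃ k, coneIdx (pt u) (pt x) = k + 1 := ⟨_, rfl⟩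
    have hmem := coneIdx_eq_succ_iff.1 hk
    rw [pt_sub] at hmem
    exact ⟨k, by linarith [coneIdx_le_six (pt u) (pt x)], hk,
      signs_eq_coneSigns ⟨hmem.1.lt_of_ne (hx k).symm, hmem.2⟩⟩
  obtain ⟨k, hk, hvk, hvs⟩ := spec v hv
  obtain ⟨l, hl, hwl, hws⟩ := spec w hw
  rw [sameCone_iff_signs_eq, hvk, hwl, hvs, hws, add_left_inj, coneSigns_injOn.eq_iff hk hl]

namespace Generic
variable {z : ι → ℝ × ℝ} {i j k : ι}

theorem argIn_ne (g : Generic z) (hij : i ≠ j) (m : ℕ) :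
    argIn (pt (z j - z i)) ≠ m * (π / 3) := by
  refine argIn_pt_ne (sub_ne_zero.2 (g.injective_fst.ne hij.symm))
    (sub_ne_zero.2 (g.injective_snd.ne hij.symm)) ?_ m
  rw [Prod.fst_sub, Prod.snd_sub, sub_add_sub_comm]
  exact sub_ne_zero.2 (g.injective_add.ne hij.symm)

theorem ne_of_sameCone (g : Generic z) (hij : i ≠ j) (h : SameCone (z i) (z j) (z k)) :
    i ≠ k := by
  rintro rfl
  have hfst := h.1
  rw [sub_self, _root_.sign_zero, _root_.sign_eq_zero_iff, sub_eq_zero] at hfst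
  exact hij (g.injective_fst hfst).symm

theorem coneIdx_eq_iff (g : Generic z) (hij : i ≠ j) (hik : i ≠ k) :
    coneIdx (pt (z i)) (pt (z k)) = coneIdx (pt (z i)) (pt (z j)) ↔ SameCone (z i) (z j) (z k) := by
  rw [eq_comm, coneIdx_pt_eq_iff (g.argIn_ne hij) (g.argIn_ne hik)]

theorem injective (g : Generic z) : Function.Injective fun i => pt (z i) :=
  pt_injective.comp (Function.Injective.of_comp g.injective_fst)

end Generic

/-- The set of points in the plane with oblique coordinates `z`. -/
def pointSet [Finite ι] (z : ι → ℝ × ℝ) : Finset ℂ := (Set.finite_range fun i => pt (z i)).toFinset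

section
variable [Finite ι] {z : ι → ℝ × ℝ} {i j : ι}

theorem mem_pointSet {w : ℂ} : w ∈ pointSet z ↔ ∃ i, pt (z i) = w := by
  rw [pointSet, Set.Finite.mem_toFinset, Set.mem_range]

theorem pt_mem_pointSet (z : ι → ℝ × ℝ) (i : ι) : pt (z i) ∈ pointSet z := mem_pointSet.2 ⟨i, rfl⟩

theorem Generic.genPos_pointSet (g : Generic z) : GenPos (pointSet z) := by
  intro u hu v hv huv
  obtain ⟨i, rfl⟩ := mem_pointSet.1 hu
  obtain ⟨j, rfl⟩ := mem_pointSet.1 hv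
  rw [pt_sub]
  exact g.argIn_ne (ne_of_apply_ne (fun i => pt (z i)) huv)

theorem projDist_pt_le_iff {u v u' v' : ℝ × ℝ} :
    projDist (pt u) (pt v) ≤ projDist (pt u') (pt v') ↔ hexDist u v ≤ hexDist u' v' := by
  rw [projDist_pt, projDist_pt, mul_le_mul_iff_right₀ (by positivity)]

theorem Generic.thetaEdge_iff (g : Generic z) :
    ThetaEdge (pointSet z) (pt (z i)) (pt (z j)) ↔ Theta z i j := by
  constructor
  · rintro ⟨-, -, hne, hmin⟩
    have hij : i ≠ j := fun h => hne (by rw [h])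
    refine ⟨hij, fun k hk => projDist_pt_le_iff.1 (hmin _ (pt_mem_pointSet z k) ?_)⟩
    have hik := g.ne_of_sameCone hij hk
    exact mem_cone_coneIdx_iff.2 ⟨g.injective.ne hik.symm, (g.coneIdx_eq_iff hij hik).2 hk⟩
  · rintro ⟨hij, hmin⟩
    refine ⟨pt_mem_pointSet z i, pt_mem_pointSet z j, g.injective.ne hij.symm, fun w hw hcone => ?_⟩
    obtain ⟨k, rfl⟩ := mem_pointSet.1 hw
    obtain ⟨hne, hidx⟩ := mem_cone_coneIdx_iff.1 hcone
    have hik : i ≠ k := fun h => hne (by rw [h])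
    exact projDist_pt_le_iff.2 (hmin k ((g.coneIdx_eq_iff hij hik).1 hidx))

theorem Generic.thetaTheta_of_thetaThetaEdge (g : Generic z)
    (h : ThetaThetaEdge (pointSet z) (pt (z i)) (pt (z j))) : ThetaTheta z i j := by
  have hij := g.thetaEdge_iff.1 h.1
  refine ⟨hij, fun k hk hcone => projDist_pt_le_iff.1 (h.2 _ (g.thetaEdge_iff.2 hk) ?_)⟩
  exact (g.coneIdx_eq_iff hij.1.symm hk.1.symm).2 hcone

end

theorem pathLength_cons_cons (a b : ℂ) (p : List ℂ) :
    pathLength (a :: b :: p) = dist a b + pathLength (b :: p) := by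
  simp only [pathLength, List.tail_cons, List.zipWith_cons_cons, List.sum_cons]

theorem sub_le_pathLength {A : ℂ → ℂ → Prop} {ψ : ℂ → ℝ}
    (hψ : ∀ u v, A u v → |ψ u - ψ v| ≤ dist u v) {u v : ℂ} {p : List ℂ} (hp : IsPath A u v p) :
    ψ v - ψ u ≤ pathLength p := by
  obtain ⟨hchain, hhead, hlast⟩ := hp
  induction p generalizing u with
  | nil => cases hhead
  | cons a p ih =>
    cases hhead
    cases p with
    | nil =>
      cases hlast
      simp [pathLength]
    | cons b p =>
      obtain ⟨hab, hchain⟩ := List.isChain_cons_cons.1 hchain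
      rw [pathLength_cons_cons]
      rw [List.getLast?_cons_cons] at hlast
      linarith [ih hchain rfl hlast, hψ a b hab, neg_abs_le (ψ a - ψ b)]

theorem IsPotential.sub_le_pathLength [Finite ι] {z : ι → ℝ × ℝ} {φ : ι → ℝ} {i j : ι}
    (hφ : IsPotential z φ) (g : Generic z) {p : List ℂ}
    (hp : IsPath (TTAdj (pointSet z)) (pt (z i)) (pt (z j)) p) : φ j - φ i ≤ pathLength p := by
  let ψ : ℂ → ℝ := Function.extend (fun i => pt (z i)) φ 0
  have ψ_pt (i : ι) : ψ (pt (z i)) = φ i := g.injective.extend_apply φ 0 i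
  have edge_le {u v : ℂ} (h : ThetaThetaEdge (pointSet z) u v) : |ψ u - ψ v| ≤ dist u v := by
    obtain ⟨i, rfl⟩ := mem_pointSet.1 h.1.1
    obtain ⟨j, rfl⟩ := mem_pointSet.1 h.1.2.1
    rw [ψ_pt, ψ_pt]
    exact hφ i j (g.thetaTheta_of_thetaThetaEdge h)
  rw [← ψ_pt, ← ψ_pt]
  refine _root_.sub_le_pathLength (fun u v h => ?_) hp
  rcases h with h | h
  · exact edge_le h
  · rw [abs_sub_comm, dist_comm]
    exact edge_le h

/-- `ΘΘ₆` is not a spanner: for every real `t` there is a finite set `S` in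
general position and `u, v ∈ S` such that every path between `u` and `v` in `ΘΘ₆(S)` has
length greater than `t·|uv|`. -/
theorem thetaTheta6_not_spanner :
    ∀ t : ℝ, ∃ S : Finset ℂ, GenPos S ∧
      ∃ u ∈ S, ∃ v ∈ S, u ≠ v ∧
        ∀ p : List ℂ, IsPath (TTAdj S) u v p → t * dist u v < pathLength p := by
  intro t
  obtain ⟨n, hn⟩ := exists_nat_gt (16 * t)
  obtain ⟨ι, _, C, φ, hφ, -, hgrowth⟩ := Config.exists_isPotential n
  have hne : pt (C.z C.bot) ≠ pt (C.z C.top) := C.generic.injective.ne C.bot_ne_top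
  refine ⟨pointSet C.z, C.generic.genPos_pointSet, _, pt_mem_pointSet C.z C.bot, _,
    pt_mem_pointSet C.z C.top, hne, fun p hp => ?_⟩
  calc t * dist (pt (C.z C.bot)) (pt (C.z C.top))
      < n / 16 * dist (pt (C.z C.bot)) (pt (C.z C.top)) :=
        mul_lt_mul_of_pos_right (by linarith) (dist_pos.2 hne)
    _ ≤ n / 16 * (C.width + C.height) :=
        mul_le_mul_of_nonneg_left C.dist_le_width_add_height (by positivity)
    _ ≤ φ C.top - φ C.bot := hgrowth
    _ ≤ pathLength p := hφ.sub_le_pathLength C.generic hp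

end
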